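/- Let q⁰, q¹, …, qᵐ be pairwise mutually singular probability measures on a measurable space X and b ∈ ℝᵐ. Then for every λ ∈ ℝ₊ᵐ with λᵢ > 0 for all i, the dual function satisfies the closed form g(λ) = inf over probability measures p of [KL(q⁰‖p) + Σᵢ λᵢ (KL(qⁱ‖p) − bᵢ)] = (1 + Σᵢ λᵢ) log(1 + Σᵢ λᵢ) − Σᵢ λᵢ log λᵢ − Σᵢ λᵢ bᵢ, and the infimum is attained at the mixture q_mix^{(λ)} = (q⁰ + Σᵢ λᵢ qⁱ)/(1 + Σᵢ λᵢ). -/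

import Mathlib

open MeasureTheory

/-- The Kullback–Leibler divergence `KL(μ‖ν)`, with values in `EReal`. -/
noncomputable def KL {X : Type*} [MeasurableSpace X] (μ ν : Measure X) : EReal :=
  open Classical in
  if μ ≪ ν ∧ Integrable (llr μ ν) μ then ((∫ x, llr μ ν x ∂μ : ℝ) : EReal) else ⊤

/-- The Lagrangian `L(p, λ) = KL(q⁰‖p) + ∑ i, λ i * (KL(qⁱ‖p) − b i)`. -/
noncomputable def Lagrangian {X : Type*} [MeasurableSpace X] {m : ℕ}
    (q0 : Measure X) (qi : Fin m → Measure X) (b : Fin m → ℝ)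
    (p : Measure X) (l : Fin m → ℝ) : EReal :=
  KL q0 p + ∑ i, (l i : EReal) * (KL (qi i) p - (b i : EReal))

/-- The dual function `g(λ) = inf over probability measures p of L(p, λ)`. -/
noncomputable def dualFn {X : Type*} [MeasurableSpace X] {m : ℕ}
    (q0 : Measure X) (qi : Fin m → Measure X) (b : Fin m → ℝ) (l : Fin m → ℝ) : EReal :=
  ⨅ p : {p : Measure X // IsProbabilityMeasure p}, Lagrangian q0 qi b p.1 l

/-- The mixture distribution `q_mix^{(λ)} = (q⁰ + ∑ i, λ i • qⁱ) / (1 + ∑ i, λ i)`. -/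
noncomputable def qMix {X : Type*} [MeasurableSpace X] {m : ℕ}
    (q0 : Measure X) (qi : Fin m → Measure X) (l : Fin m → ℝ) : Measure X :=
  (ENNReal.ofReal (1 + ∑ i, l i))⁻¹ • (q0 + ∑ i, ENNReal.ofReal (l i) • qi i)

/-- Disjoint carriers for a finite pairwise singular family. -/
lemma exists_carriers {X ι : Type*} [MeasurableSpace X] [Fintype ι]
    (Q : ι → Measure X) (h : Pairwise fun i j => Q i ⟂ₘ Q j) :
    ∃ A : ι → Set X, (∀ k, MeasurableSet (A k)) ∧ (∀ k, Q k (A k)ᶜ = 0) ∧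
      Pairwise fun i j => Disjoint (A i) (A j) := by
  classical
  have h' : ∀ i j, ∃ s : Set X, MeasurableSet s ∧ (i ≠ j → Q i s = 0 ∧ Q j sᶜ = 0) := by
    intro i j
    by_cases hij : i = j
    · exact ⟨∅, MeasurableSet.empty, fun h => absurd hij h⟩
    · obtain ⟨s, hs, h1, h2⟩ := h hij
      exact ⟨s, hs, fun _ => ⟨h1, h2⟩⟩
  choose s hs hs' using h'
  refine ⟨fun k => ⋂ j, if j = k then Set.univ else (s k j)ᶜ ∩ s j k, ?_, ?_, ?_⟩
  · intro k
    refine MeasurableSet.iInter fun j => ?_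
    split_ifs
    · exact MeasurableSet.univ
    · exact (hs k j).compl.inter (hs j k)
  · intro k
    rw [Set.compl_iInter, measure_iUnion_null_iff]
    intro j
    split_ifs with hjk
    · simp
    · rw [Set.compl_inter, compl_compl]
      exact measure_union_null (hs' k j (Ne.symm hjk)).1 (hs' j k hjk).2
  · intro i j hij
    rw [Set.disjoint_left]
    intro x hx hx'
    have h1 := Set.mem_iInter.1 hx j
    have h2 := Set.mem_iInter.1 hx' i
    rw [if_neg hij.symm] at h1
    rw [if_neg hij] at h2
    exact h1.1 h2.2

lemma KL_lower {X : Type*} [MeasurableSpace X] (q p : Measure X) [IsProbabilityMeasure q]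
    [IsProbabilityMeasure p] (A : Set X) (hA : MeasurableSet A) (hq : q Aᶜ = 0)
    (c : ℝ) (hc : 0 < c) :
    ((1 - Real.log c - p.real A / c : ℝ) : EReal) ≤ KL q p := by
  unfold KL
  split_ifs with h
  swap
  · exact le_top
  obtain ⟨hac, hint⟩ := h
  rw [EReal.coe_le_coe_iff]
  have hI : Integrable (fun x => (p.rnDeriv q x).toReal) q := Measure.integrable_toReal_rnDeriv
  have hle : ∫ x, (p.rnDeriv q x).toReal ∂q ≤ p.real A := by
    have : q.restrict A = q := by
      rw [Measure.restrict_eq_self_of_ae_mem]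
      exact mem_ae_iff.2 hq
    calc ∫ x, (p.rnDeriv q x).toReal ∂q = ∫ x in A, (p.rnDeriv q x).toReal ∂q := by rw [this]
      _ ≤ p.real A := Measure.setIntegral_toReal_rnDeriv_le (measure_ne_top p A)
  have hpt : ∀ᵐ x ∂q, 1 - Real.log c - (p.rnDeriv q x).toReal / c ≤ llr q p x := by
    filter_upwards [Measure.inv_rnDeriv hac, hac.ae_le (Measure.rnDeriv_lt_top q p),
      Measure.rnDeriv_pos hac] with x h1 h2 h3
    rw [← h1, llr_def]
    simp only [Pi.inv_apply, ENNReal.toReal_inv]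
    have hr : 0 < (q.rnDeriv p x).toReal := ENNReal.toReal_pos h3.ne' h2.ne
    have := Real.log_le_sub_one_of_pos (x := (q.rnDeriv p x).toReal⁻¹ / c) (by positivity)
    rw [Real.log_div (by positivity) hc.ne', Real.log_inv] at this
    linarith
  have := integral_mono_ae ((integrable_const _).sub (hI.div_const c)) hint hpt
  refine le_trans ?_ this
  rw [integral_sub' (integrable_const _) (hI.div_const c), integral_const, integral_div]
  simp only [probReal_univ, one_smul]
  gcongr

lemma KL_mix {X : Type*} [MeasurableSpace X] (q ν : Measure X) [IsProbabilityMeasure q]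
    [IsFiniteMeasure ν] (hs : ν ⟂ₘ q) (c : ℝ) (hc : 0 < c) :
    KL q (ENNReal.ofReal c • q + ν) = ((- Real.log c : ℝ) : EReal) := by
  have hc' : ENNReal.ofReal c ≠ 0 := by simpa using hc
  haveI : IsFiniteMeasure (ENNReal.ofReal c • q) := Measure.smul_finite q ENNReal.ofReal_ne_top
  have hac : q ≪ ENNReal.ofReal c • q + ν :=
    ((Measure.absolutelyContinuous_smul hc')).add_right ν
  have hae : llr q (ENNReal.ofReal c • q + ν) =ᵐ[q] fun _ => - Real.log c := by
    filter_upwards [Measure.inv_rnDeriv hac, Measure.rnDeriv_add (ENNReal.ofReal c • q) ν q,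
      Measure.rnDeriv_smul_left_of_ne_top q q (ENNReal.ofReal_ne_top (r := c)),
      Measure.rnDeriv_self q, hs.rnDeriv_ae_eq_zero] with x h1 h2 h3 h4 h5
    rw [h2, Pi.add_apply, h3, h5, Pi.smul_apply, h4] at h1
    simp only [Pi.inv_apply, Pi.zero_apply, add_zero, smul_eq_mul, mul_one] at h1
    rw [llr_def]
    simp only
    rw [← inv_inv (Measure.rnDeriv q _ x), h1, ENNReal.toReal_inv, Real.log_inv,
      ENNReal.toReal_ofReal hc.le]
  unfold KL
  rw [if_pos ⟨hac, (integrable_const _).congr hae.symm⟩, integral_congr_ae hae]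
  simp

lemma coe_sum_EReal {ι : Type*} (s : Finset ι) (f : ι → ℝ) :
    ((∑ i ∈ s, f i : ℝ) : EReal) = ∑ i ∈ s, (f i : EReal) := by
  classical
  induction s using Finset.induction_on with
  | empty => simp
  | insert a s ha ih => rw [Finset.sum_insert ha, Finset.sum_insert ha, EReal.coe_add, ih]

lemma coe_lagr {m : ℕ} (t0 : ℝ) (t b l : Fin m → ℝ) :
    ((t0 + ∑ i, l i * (t i - b i) : ℝ) : EReal) =
      (t0 : EReal) + ∑ i, (l i : EReal) * ((t i : EReal) - (b i : EReal)) := by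
  rw [EReal.coe_add, coe_sum_EReal]
  simp only [EReal.coe_mul, EReal.coe_sub]

theorem stmt7 {X : Type*} [MeasurableSpace X] {m : ℕ}
    (q0 : Measure X) [IsProbabilityMeasure q0]
    (qi : Fin m → Measure X) (hqi : ∀ i, IsProbabilityMeasure (qi i))
    (hsing0 : ∀ i, q0 ⟂ₘ qi i)
    (hsing : Pairwise fun i j => qi i ⟂ₘ qi j)
    (b : Fin m → ℝ) (l : Fin m → ℝ) (hl : ∀ i, 0 < l i) :
    dualFn q0 qi b l
      = (((1 + ∑ i, l i) * Real.log (1 + ∑ i, l i)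
          - ∑ i, l i * Real.log (l i) - ∑ i, l i * b i : ℝ) : EReal) ∧
    Lagrangian q0 qi b (qMix q0 qi l) l = dualFn q0 qi b l := by
  set S : ℝ := 1 + ∑ i, l i with hS
  have hS0 : 0 < S := by
    have : 0 ≤ ∑ i, l i := Finset.sum_nonneg fun i _ => (hl i).le
    linarith
  have hSinv : (ENNReal.ofReal S)⁻¹ = ENNReal.ofReal S⁻¹ := (ENNReal.ofReal_inv_of_pos hS0).symm
  -- value at mixture
  have hprob : IsProbabilityMeasure (qMix q0 qi l) := by
    constructor
    have : ENNReal.ofReal S = 1 + ∑ i, ENNReal.ofReal (l i) := by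
      rw [hS, ENNReal.ofReal_add zero_le_one (Finset.sum_nonneg fun i _ => (hl i).le),
        ENNReal.ofReal_one, ENNReal.ofReal_sum_of_nonneg fun i _ => (hl i).le]
    simp only [qMix, ← hS, Measure.smul_apply, Measure.add_apply, Measure.finsetSum_apply,
      measure_univ, smul_eq_mul, mul_one]
    rw [← this]
    exact ENNReal.inv_mul_cancel (by simpa using hS0) ENNReal.ofReal_ne_top
  have hfin : ∀ i, IsFiniteMeasure (ENNReal.ofReal (l i) • qi i) := fun i =>
    Measure.smul_finite _ ENNReal.ofReal_ne_top
  have hK0 : KL q0 (qMix q0 qi l) = ((-Real.log S⁻¹ : ℝ) : EReal) := by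
    have e : qMix q0 qi l = ENNReal.ofReal S⁻¹ • q0 +
        ENNReal.ofReal S⁻¹ • ∑ i, ENNReal.ofReal (l i) • qi i := by
      rw [qMix, ← hS, hSinv, smul_add]
    rw [e]
    haveI : IsFiniteMeasure (ENNReal.ofReal S⁻¹ • ∑ i, ENNReal.ofReal (l i) • qi i) :=
      Measure.smul_finite _ ENNReal.ofReal_ne_top
    refine KL_mix _ _ (Measure.MutuallySingular.smul _ ?_) _ (by positivity)
    rw [← Measure.sum_fintype, Measure.MutuallySingular.sum_left]
    exact fun i => (hsing0 i).symm.smul _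
  have hKi : ∀ k, KL (qi k) (qMix q0 qi l) = ((-Real.log (S⁻¹ * l k) : ℝ) : EReal) := by
    intro k
    have e : qMix q0 qi l = ENNReal.ofReal (S⁻¹ * l k) • qi k +
        ENNReal.ofReal S⁻¹ • (q0 + ∑ i ∈ Finset.univ.erase k, ENNReal.ofReal (l i) • qi i) := by
      rw [qMix, ← hS, hSinv, ENNReal.ofReal_mul (by positivity), mul_smul, ← smul_add,
        ← Finset.add_sum_erase _ _ (Finset.mem_univ k)]
      congr 1
      abel
    rw [e]
    haveI : IsFiniteMeasure (ENNReal.ofReal S⁻¹ •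
        (q0 + ∑ i ∈ Finset.univ.erase k, ENNReal.ofReal (l i) • qi i)) :=
      Measure.smul_finite _ ENNReal.ofReal_ne_top
    refine KL_mix _ _ (Measure.MutuallySingular.smul _ ?_) _ (mul_pos (by positivity) (hl k))
    refine Measure.MutuallySingular.add_left (hsing0 k) ?_
    rw [← Measure.sum_coe_finset, Measure.MutuallySingular.sum_left]
    exact fun i => (hsing (Finset.ne_of_mem_erase i.2)).smul _
  have hlogi : ∀ k, -Real.log (S⁻¹ * l k) = Real.log S - Real.log (l k) := fun k => by
    rw [Real.log_mul (by positivity) (hl k).ne', Real.log_inv]; ring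
  have hval : ∀ r : ℝ, Real.log S + ∑ i, l i * (Real.log S - Real.log (l i) - b i)
      = S * Real.log S - ∑ i, l i * Real.log (l i) - ∑ i, l i * b i := by
    intro _
    simp only [mul_sub, Finset.sum_sub_distrib, ← Finset.sum_mul]
    rw [hS]; ring
  have hmix : Lagrangian q0 qi b (qMix q0 qi l) l
      = ((S * Real.log S - ∑ i, l i * Real.log (l i) - ∑ i, l i * b i : ℝ) : EReal) := by
    unfold Lagrangian
    simp only [hK0, hKi]
    rw [← coe_lagr, ← hval 0]
    simp only [hlogi, Real.log_inv, neg_neg]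
  have hlow : ∀ p : Measure X, IsProbabilityMeasure p →
      ((S * Real.log S - ∑ i, l i * Real.log (l i) - ∑ i, l i * b i : ℝ) : EReal)
        ≤ Lagrangian q0 qi b p l := by
    intro p hp
    obtain ⟨A, hA, hA0, hAd⟩ := exists_carriers (fun k : Option (Fin m) => k.elim q0 qi) (by
      rintro (_ | i) (_ | j) hij
      · exact absurd rfl hij
      · exact hsing0 j
      · exact (hsing0 i).symm
      · exact hsing (fun h => hij (by rw [h])))
    have hsum : p.real (A none) + ∑ i, p.real (A (some i)) ≤ 1 := by
      rw [← Fintype.sum_option (fun k => p.real (A k)),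
        ← measureReal_iUnion_fintype hAd hA]
      exact measureReal_le_one
    have h0 := KL_lower q0 p (A none) (hA _) (hA0 none) S⁻¹ (by positivity)
    have hi := fun i => KL_lower (qi i) p (A (some i)) (hA _) (hA0 (some i)) (S⁻¹ * l i)
      (mul_pos (by positivity) (hl i))
    unfold Lagrangian
    refine le_trans ?_ (add_le_add h0 (Finset.sum_le_sum fun i _ =>
      mul_le_mul_of_nonneg_left (EReal.sub_le_sub (hi i) le_rfl) 
        (EReal.coe_nonneg.2 (hl i).le)))
    rw [← coe_lagr, EReal.coe_le_coe_iff, ← hval 0]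
    have e : ∀ i, l i * (1 - Real.log (S⁻¹ * l i) - p.real (A (some i)) / (S⁻¹ * l i) - b i)
        = l i * (Real.log S - Real.log (l i) - b i) + l i - S * p.real (A (some i)) := by
      intro i
      have := hlogi i
      have h2 : l i * (p.real (A (some i)) / (S⁻¹ * l i)) = S * p.real (A (some i)) := by
        have := (hl i).ne'
        field_simp
      rw [mul_sub, mul_sub, h2]
      linear_combination l i * this
    simp only [e, Finset.sum_sub_distrib, Finset.sum_add_distrib, ← Finset.mul_sum]
    rw [Real.log_inv, div_inv_eq_mul]
    nlinarith [mul_le_mul_of_nonneg_left hsum hS0.le]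
  have hd : dualFn q0 qi b l
      = ((S * Real.log S - ∑ i, l i * Real.log (l i) - ∑ i, l i * b i : ℝ) : EReal) := by
    apply le_antisymm
    · rw [← hmix]
      exact iInf_le (fun p : {p : Measure X // IsProbabilityMeasure p} =>
        Lagrangian q0 qi b p.1 l) ⟨_, hprob⟩
    · exact le_iInf fun p => hlow p.1 p.2
  exact ⟨hd, hmix.trans hd.symm⟩
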